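/- arXiv:1511.05346 — 2 statements merged into one kernel-verified Lean document; each statement's English description precedes it below -/
import Mathlib

section
/- Let S₂(n) be the number of ordered pairs of integers (p, q) with p > 0, q ≥ 0 and p² + q² = n. Then the number of orbits of the multiplication-by-i action on the set of index-n subgroups of ℤ[i] (as an additive lattice) equals (σ₁(n) + S₂(n))/2, for n > 2. -/
/-- `S₂(n)`: the number of ordered integer pairs `(p, q)` with `p > 0`, `q ≥ 0`
and `p² + q² = n`. -/
noncomputable def S2 (n : ℕ) : ℕ :=
  Nat.card {pq : ℤ × ℤ // 0 < pq.1 ∧ 0 ≤ pq.2 ∧ pq.1 ^ 2 + pq.2 ^ 2 = n}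

/-!
Since `i² = -1` fixes every additive subgroup, `M ↦ iM` is an involution of the set of index-`n`
subgroups, and Burnside's lemma says that twice its number of orbits is the number of subgroups plus
the number of fixed ones. A subgroup of `ℤ × ℤ` of index `n` is given by its slice `dℤ` along the
second factor, where `d ∣ n`, and a slope in `ℤ/dℤ`, so there are `∑_{d ∣ n} d = σ₁(n)` of them. The
subgroups fixed by `i` are the ideals of `ℤ[i]`; these are principal, each nonzero one has exactly
one generator `p + qi` with `p > 0` and `q ≥ 0`, and its index is the norm `p² + q²`.
-/

open scoped Pointwise

/-- The additive subgroups of `G` of index `n`. -/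
abbrev SubgroupOfIndex (G : Type*) [AddGroup G] (n : ℕ) : Type _ :=
  {M : AddSubgroup G // M.index = n}

section SubgroupsOfProduct

variable {G H : Type*} [AddCommGroup G] [AddCommGroup H]

theorem index_eq_index_map_fst_mul_index_comap_inr (M : AddSubgroup (G × H)) :
    M.index = (M.map (AddMonoidHom.fst G H)).index * (M.comap (AddMonoidHom.inr G H)).index := by
  have hrange : (AddMonoidHom.inr G H).range = (AddMonoidHom.fst G H).ker := by
    ext ⟨x, y⟩
    simp [-AddMonoidHom.ker_fst, AddMonoidHom.mem_ker, eq_comm]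
  rw [AddSubgroup.index_map, AddMonoidHom.range_eq_top.mpr Prod.fst_surjective,
    AddSubgroup.index_top, mul_one, AddSubgroup.index_comap, hrange,
    ← AddSubgroup.relIndex_sup_right, sup_comm, mul_comm,
    AddSubgroup.relIndex_mul_index le_sup_right]

theorem index_prod (K : AddSubgroup G) (L : AddSubgroup H) :
    (K.prod L).index = K.index * L.index := by
  have hmap : (K.prod L).map (AddMonoidHom.fst G H) = K := by
    ext x
    exact ⟨fun ⟨_, hz, hzx⟩ => hzx ▸ hz.1, fun hx => ⟨(x, 0), ⟨hx, L.zero_mem⟩, rfl⟩⟩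
  have hcomap : (K.prod L).comap (AddMonoidHom.inr G H) = L := by
    ext y
    exact and_iff_right K.zero_mem
  rw [index_eq_index_map_fst_mul_index_comap_inr, hmap, hcomap]

end SubgroupsOfProduct

theorem eq_zmultiples_index (H : AddSubgroup ℤ) : H = AddSubgroup.zmultiples (H.index : ℤ) := by
  obtain ⟨a, rfl⟩ := Int.subgroup_cyclic H
  rw [← AddSubgroup.zmultiples_eq_closure, Int.index_zmultiples, Int.zmultiples_natAbs]

theorem index_zmultiples_natCast (n : ℕ) : (AddSubgroup.zmultiples (n : ℤ)).index = n := by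
  rw [Int.index_zmultiples, Int.natAbs_natCast]

section SlopeSubgroup

variable {A : Type*} [AddCommGroup A]

/-- The subgroup of `ℤ × A` with first projection `aℤ`, second slice `D` and slope `β`: the
preimage of the cyclic subgroup of `ℤ × A ⧸ D` generated by `(a, β)`. For `A = ℤ` the triple
`(a, D, β)` is the Hermite normal form of a basis, with `β` in place of a reduced representative. -/
def slopeSubgroup (a : ℤ) (D : AddSubgroup A) (β : A ⧸ D) : AddSubgroup (ℤ × A) :=
  (AddSubgroup.zmultiples (a, β)).comap
    ((AddMonoidHom.id ℤ).prodMap (QuotientAddGroup.mk' D))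

theorem mem_slopeSubgroup {a : ℤ} {D : AddSubgroup A} {β : A ⧸ D} {z : ℤ × A} :
    z ∈ slopeSubgroup a D β ↔ ∃ k : ℤ, k * a = z.1 ∧ k • β = (z.2 : A ⧸ D) := by
  simp [slopeSubgroup, AddSubgroup.mem_zmultiples_iff, Prod.ext_iff]

theorem map_fst_slopeSubgroup (a : ℤ) (D : AddSubgroup A) (β : A ⧸ D) :
    (slopeSubgroup a D β).map (AddMonoidHom.fst ℤ A) = AddSubgroup.zmultiples a := by
  ext x
  constructor
  · rintro ⟨z, hz, rfl⟩
    obtain ⟨k, hk, -⟩ := mem_slopeSubgroup.mp hz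
    exact ⟨k, hk⟩
  · rintro ⟨k, rfl⟩
    obtain ⟨b, hb⟩ := QuotientAddGroup.mk_surjective (k • β)
    exact ⟨(k * a, b), mem_slopeSubgroup.mpr ⟨k, rfl, hb.symm⟩, rfl⟩

theorem comap_inr_slopeSubgroup {a : ℤ} (ha : a ≠ 0) (D : AddSubgroup A) (β : A ⧸ D) :
    (slopeSubgroup a D β).comap (AddMonoidHom.inr ℤ A) = D := by
  ext y
  simp [mem_slopeSubgroup, ha, eq_comm (a := (0 : A ⧸ D))]

theorem index_slopeSubgroup {a : ℤ} (ha : a ≠ 0) (D : AddSubgroup A) (β : A ⧸ D) :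
    (slopeSubgroup a D β).index = a.natAbs * D.index := by
  rw [index_eq_index_map_fst_mul_index_comap_inr, map_fst_slopeSubgroup,
    comap_inr_slopeSubgroup ha, Int.index_zmultiples]

theorem slopeSubgroup_injective {a : ℤ} (ha : a ≠ 0) (D : AddSubgroup A) :
    Function.Injective (slopeSubgroup a D) := by
  intro β β' h
  obtain ⟨b, rfl⟩ := QuotientAddGroup.mk_surjective β
  have hmem : (a, b) ∈ slopeSubgroup a D β' :=
    h ▸ mem_slopeSubgroup.mpr ⟨1, one_mul a, one_smul ℤ _⟩
  obtain ⟨k, hka, hkβ⟩ := mem_slopeSubgroup.mp hmem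
  obtain rfl : k = 1 := (mul_eq_right₀ ha).mp hka
  simpa using hkβ.symm

theorem eq_slopeSubgroup {M : AddSubgroup (ℤ × A)} {w : ℤ × A} (hw : w ∈ M)
    (hM : M.map (AddMonoidHom.fst ℤ A) = AddSubgroup.zmultiples w.1) :
    M = slopeSubgroup w.1 (M.comap (AddMonoidHom.inr ℤ A)) w.2 := by
  have mem_iff {z : ℤ × A} {k : ℤ} (hk : k * w.1 = z.1) :
      z ∈ M ↔ k • (w.2 : A ⧸ M.comap (AddMonoidHom.inr ℤ A)) = z.2 := by
    have hz : -(k • w) + z = (0, -(k • w.2) + z.2) := by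
      ext <;> simp [← hk]
    rw [← QuotientAddGroup.mk_zsmul, QuotientAddGroup.eq, AddSubgroup.mem_comap,
      AddMonoidHom.inr_apply, ← hz, M.add_mem_cancel_left (M.neg_mem (M.zsmul_mem hw k))]
  ext z
  rw [mem_slopeSubgroup]
  constructor
  · intro hz
    obtain ⟨k, hk⟩ : z.1 ∈ AddSubgroup.zmultiples w.1 := hM ▸ ⟨z, hz, rfl⟩
    exact ⟨k, hk, (mem_iff hk).mp hz⟩
  · rintro ⟨k, hk, hkz⟩
    exact (mem_iff hk).mpr hkz

theorem exists_eq_slopeSubgroup {M : AddSubgroup (ℤ × A)} {D : AddSubgroup A}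
    (hD : M.comap (AddMonoidHom.inr ℤ A) = D) (hM : M.index ≠ 0) :
    ∃ β : A ⧸ D, slopeSubgroup (M.index / D.index : ℕ) D β = M := by
  have hindex := index_eq_index_map_fst_mul_index_comap_inr M
  rw [hD] at hindex
  have hDpos : 0 < D.index := Nat.pos_of_ne_zero (right_ne_zero_of_mul (hindex ▸ hM))
  have hmap : M.map (AddMonoidHom.fst ℤ A)
      = AddSubgroup.zmultiples ((M.index / D.index : ℕ) : ℤ) := by
    rw [hindex, Nat.mul_div_cancel _ hDpos]
    exact eq_zmultiples_index _
  obtain ⟨w, hw, hwa⟩ : ((M.index / D.index : ℕ) : ℤ) ∈ M.map (AddMonoidHom.fst ℤ A) :=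
    hmap ▸ AddSubgroup.mem_zmultiples _
  rw [← hwa] at hmap ⊢
  subst hD
  exact ⟨w.2, (eq_slopeSubgroup hw hmap).symm⟩

/-- Index-`n` subgroups of `ℤ × A`, for `n ≠ 0`, are classified by their slice `D` along `A` and a
slope in `A ⧸ D`; the first projection is then forced to be `(n / D.index)ℤ`. -/
noncomputable def slopeEquiv {n : ℕ} (hn : n ≠ 0) :
    (Σ D : {D : AddSubgroup A // D.index ∣ n}, A ⧸ D.1) ≃ SubgroupOfIndex (ℤ × A) n :=
  have hdiv (D : {D : AddSubgroup A // D.index ∣ n}) : ((n / D.1.index : ℕ) : ℤ) ≠ 0 :=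
    Nat.cast_ne_zero.mpr (Nat.div_ne_zero_iff_of_dvd D.2 |>.mpr ⟨hn, ne_zero_of_dvd_ne_zero hn D.2⟩)
  Equiv.ofBijective
    (fun x => ⟨slopeSubgroup (n / x.1.1.index : ℕ) x.1.1 x.2, by
      rw [index_slopeSubgroup (hdiv x.1), Int.natAbs_natCast, Nat.div_mul_cancel x.1.2]⟩) <| by
    constructor
    · rintro ⟨D, β⟩ ⟨D', β'⟩ h
      have hsub : slopeSubgroup _ D.1 β = slopeSubgroup _ D'.1 β' := congrArg Subtype.val h
      obtain rfl : D = D' := Subtype.ext <| by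
        rw [← comap_inr_slopeSubgroup (hdiv D) D.1 β, hsub, comap_inr_slopeSubgroup (hdiv D')]
      obtain rfl := slopeSubgroup_injective (hdiv D) D.1 hsub
      rfl
    · rintro ⟨M, rfl⟩
      obtain ⟨β, hβ⟩ := exists_eq_slopeSubgroup rfl hn
      exact ⟨⟨⟨_, index_eq_index_map_fst_mul_index_comap_inr M ▸ dvd_mul_left _ _⟩, β⟩,
        Subtype.ext hβ⟩

end SlopeSubgroup

/-- Subgroups of `ℤ` of index dividing `n`, identified with their index. -/
noncomputable def subgroupEquivDivisors {n : ℕ} (hn : n ≠ 0) :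
    {D : AddSubgroup ℤ // D.index ∣ n} ≃ n.divisors where
  toFun D := ⟨D.1.index, Nat.mem_divisors.mpr ⟨D.2, hn⟩⟩
  invFun d := ⟨AddSubgroup.zmultiples (d.1 : ℤ), by
    rw [index_zmultiples_natCast]
    exact Nat.dvd_of_mem_divisors d.2⟩
  left_inv D := Subtype.ext (eq_zmultiples_index D.1).symm
  right_inv d := Subtype.ext (index_zmultiples_natCast d.1)

theorem card_subgroupOfIndex_int_prod_int {n : ℕ} (hn : n ≠ 0) :
    Nat.card (SubgroupOfIndex (ℤ × ℤ) n) = ArithmeticFunction.sigma 1 n := by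
  let e := subgroupEquivDivisors hn
  have := Fintype.ofEquiv _ e.symm
  have (D : {D : AddSubgroup ℤ // D.index ∣ n}) : Finite (ℤ ⧸ D.1) :=
    have : D.1.FiniteIndex := ⟨ne_zero_of_dvd_ne_zero hn D.2⟩
    D.1.finite_quotient_of_finiteIndex
  calc Nat.card (SubgroupOfIndex (ℤ × ℤ) n)
      = ∑ D : {D : AddSubgroup ℤ // D.index ∣ n}, D.1.index := by
        rw [← Nat.card_congr (slopeEquiv hn), Nat.card_sigma]
        rfl
    _ = ∑ d : n.divisors, (d : ℕ) := e.sum_comp (fun d => (d : ℕ))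
    _ = ArithmeticFunction.sigma 1 n := by
        rw [Finset.sum_coe_sort n.divisors (fun d => d), ArithmeticFunction.sigma_one_apply]

/-- The coordinates of `ℤ√d` as an additive lattice of rank two. -/
def zsqrtdAddEquiv (d : ℤ) : ℤ√d ≃+ ℤ × ℤ where
  toFun z := (z.re, z.im)
  invFun p := ⟨p.1, p.2⟩
  map_add' _ _ := rfl

theorem card_subgroupOfIndex_zsqrtd (d : ℤ) {n : ℕ} (hn : n ≠ 0) :
    Nat.card (SubgroupOfIndex (ℤ√d) n) = ArithmeticFunction.sigma 1 n := by
  rw [← card_subgroupOfIndex_int_prod_int hn]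
  exact Nat.card_congr <| (zsqrtdAddEquiv d).mapAddSubgroup.toEquiv.subtypeEquiv fun M => by
    rw [← AddSubgroup.index_map_equiv M (zsqrtdAddEquiv d)]
    rfl

theorem two_mul_card_quot_iterate {X : Type*} [Finite X] {f : X → X} (hf : Function.Involutive f) :
    2 * Nat.card (Quot fun x y => ∃ k : ℕ, y = f^[k] x)
      = Nat.card X + Nat.card (Function.fixedPoints f) := by
  let _ : MulAction ℤˣ X :=
    { smul := fun u x => if u = 1 then x else f x
      one_smul := fun _ => if_pos rfl
      mul_smul := fun u v x => by
        change ite _ _ _ = ite _ (ite _ _ _) (f (ite _ _ _))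
        obtain rfl | rfl := Int.units_eq_one_or u <;> obtain rfl | rfl := Int.units_eq_one_or v <;>
          simp [hf x] }
  have hneg (x : X) : (-1 : ℤˣ) • x = f x := if_neg (by decide)
  have horbit : (fun x y => ∃ k : ℕ, y = f^[k] x) = MulAction.orbitRel ℤˣ X := by
    ext x y
    rw [MulAction.orbitRel_apply, MulAction.mem_orbit_iff]
    constructor
    · rintro ⟨k, rfl⟩
      obtain hk | hk := k.even_or_odd
      · exact ⟨1, by rw [hf.iterate_even hk, one_smul]; rfl⟩
      · exact ⟨-1, by rw [hf.iterate_odd hk, hneg, hf]⟩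
    · rintro ⟨u, rfl⟩
      obtain rfl | rfl := Int.units_eq_one_or u
      · exact ⟨0, (one_smul _ y).symm⟩
      · exact ⟨1, by rw [hneg, Function.iterate_one, hf]⟩
  have hburnside := Nat.card_congr (MulAction.sigmaFixedByEquivOrbitsProdGroup ℤˣ X)
  have huniv : (Finset.univ : Finset ℤˣ) = {1, -1} := rfl
  have hfixed : MulAction.fixedBy X (-1 : ℤˣ) = Function.fixedPoints f := by
    ext x
    rw [MulAction.mem_fixedBy, hneg, Function.mem_fixedPoints_iff]
  rw [Nat.card_prod, Nat.card_sigma, huniv, Finset.sum_pair (by decide),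
    MulAction.fixedBy_one_eq_univ, Nat.card_univ, hfixed, Nat.card_eq_fintype_card (α := ℤˣ),
    Fintype.card_units_int] at hburnside
  rw [horbit, mul_comm, hburnside]
  rfl

section PrincipalIdeals

variable {R : Type*} [CommRing R]

theorem index_span_singleton_mul {x : R} (hx : x ∈ nonZeroDivisors R) (y : R) :
    (Ideal.span {x * y}).toAddSubgroup.index
      = (Ideal.span {y}).toAddSubgroup.index * (Ideal.span {x}).toAddSubgroup.index := by
  have hmap : (Ideal.span {x * y}).toAddSubgroup
      = (Ideal.span {y}).toAddSubgroup.map (AddMonoidHom.mulLeft x) := by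
    ext z
    simp [Ideal.mem_span_singleton, dvd_def, mul_assoc, eq_comm]
  have hrange : (AddMonoidHom.mulLeft x).range = (Ideal.span {x}).toAddSubgroup := by
    ext z
    simp [Ideal.mem_span_singleton, dvd_def, eq_comm]
  rw [hmap, AddSubgroup.index_map_of_injective, hrange]
  exact fun _ _ h => (mul_cancel_left_mem_nonZeroDivisors hx).mp h

theorem index_span_singleton_map {S : Type*} [CommRing S] (e : R ≃+* S) (x : R) :
    (Ideal.span {e x}).toAddSubgroup.index = (Ideal.span {x}).toAddSubgroup.index := by
  have hcomap : (Ideal.span {x}).toAddSubgroup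
      = (Ideal.span {e x}).toAddSubgroup.comap (e : R →+ S) := by
    ext y
    simp [Ideal.mem_span_singleton, map_dvd_iff]
  rw [hcomap, AddSubgroup.index_comap_of_surjective _ e.surjective]

end PrincipalIdeals

theorem index_span_singleton_intCast (d m : ℤ) :
    (Ideal.span {(m : ℤ√d)}).toAddSubgroup.index = m.natAbs * m.natAbs := by
  have hcomap : (Ideal.span {(m : ℤ√d)}).toAddSubgroup
      = ((AddSubgroup.zmultiples m).prod (AddSubgroup.zmultiples m)).comap
        (zsqrtdAddEquiv d).toAddMonoidHom := by
    ext z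
    simp [Ideal.mem_span_singleton, Zsqrtd.intCast_dvd, AddSubgroup.mem_prod,
      Int.mem_zmultiples_iff, zsqrtdAddEquiv]
  rw [hcomap, AddSubgroup.index_comap_of_surjective _ (zsqrtdAddEquiv d).surjective, index_prod,
    Int.index_zmultiples]

/-- `(z)` and its conjugate have equal index, and their indices multiply to that of `(z.norm)`. -/
theorem index_span_singleton_eq_natAbs_norm {d : ℤ} {z : ℤ√d} (hz : z.norm ≠ 0) :
    (Ideal.span {z}).toAddSubgroup.index = z.norm.natAbs := by
  have hreg : (z.norm : ℤ√d) ∈ nonZeroDivisors (ℤ√d) := by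
    rw [mem_nonZeroDivisors_iff_left]
    exact fun x hx => Zsqrtd.eq_of_smul_eq_smul_left hz (hx.trans (mul_zero _).symm)
  have hsq := index_span_singleton_intCast d z.norm
  rw [Zsqrtd.norm_eq_mul_conj] at hreg hsq
  rw [index_span_singleton_mul (mul_mem_nonZeroDivisors.mp hreg).1, ← starRingAut_apply,
    index_span_singleton_map] at hsq
  exact Nat.mul_self_inj.mp hsq

theorem index_smul {G A : Type*} [Group G] [AddGroup A] [DistribMulAction G A] (g : G)
    (M : AddSubgroup A) : (g • M).index = M.index :=
  M.index_map_of_bijective (MulAction.bijective g)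

instance SubgroupOfIndex.instMulAction {G A : Type*} [Group G] [AddGroup A] [DistribMulAction G A]
    (n : ℕ) : MulAction G (SubgroupOfIndex A n) where
  smul g M := ⟨g • M.1, (index_smul g M.1).trans M.2⟩
  one_smul M := Subtype.ext (one_smul G M.1)
  mul_smul g h M := Subtype.ext (mul_smul g h M.1)

theorem neg_one_smul_addSubgroup {R : Type*} [Ring R] (M : AddSubgroup R) : (-1 : Rˣ) • M = M := by
  ext x
  rw [Units.smul_def, AddSubgroup.mem_smul_pointwise_iff_exists]
  constructor
  · rintro ⟨y, hy, rfl⟩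
    simpa [Units.smul_def] using hy
  · exact fun hx => ⟨-x, M.neg_mem hx, by simp⟩

theorem units_smul_toAddSubgroup {R : Type*} [CommRing R] (u : Rˣ) (J : Ideal R) :
    u • J.toAddSubgroup = J.toAddSubgroup := by
  ext x
  rw [Units.smul_def, AddSubgroup.mem_smul_pointwise_iff_exists]
  constructor
  · rintro ⟨y, hy, rfl⟩
    exact J.smul_mem _ hy
  · exact fun hx => ⟨u⁻¹ • x, J.smul_mem _ hx, smul_inv_smul u x⟩

theorem exists_ideal_toAddSubgroup_eq {d : ℤ} {M : AddSubgroup (ℤ√d)}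
    (hM : ∀ x ∈ M, Zsqrtd.sqrtd * x ∈ M) : ∃ J : Ideal (ℤ√d), J.toAddSubgroup = M := by
  refine ⟨{ M with smul_mem' := fun c x hx => ?_ }, rfl⟩
  have hc : c • x = c.re • x + c.im • (Zsqrtd.sqrtd * x) := by
    ext
    · simp [mul_left_comm, mul_assoc]
    · simp [add_comm]
  rw [hc]
  exact M.add_mem (M.zsmul_mem hx _) (M.zsmul_mem (hM x hx) _)

/-- The imaginary unit `i`, as a unit of `ℤ[i]`, so that `M ↦ iM` is its pointwise action. -/
def gaussianI : GaussianIntˣ where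
  val := ⟨0, 1⟩
  inv := ⟨0, -1⟩
  val_inv := rfl
  inv_val := rfl

theorem gaussianI_mul_self : gaussianI * gaussianI = -1 := rfl

theorem mul_gaussianI (z : GaussianInt) : z * gaussianI = ⟨-z.im, z.re⟩ := by
  ext <;> simp [gaussianI]

theorem involutive_gaussianI_smul (n : ℕ) :
    Function.Involutive fun M : SubgroupOfIndex GaussianInt n => gaussianI • M := fun M =>
  Subtype.ext <| by
    change gaussianI • gaussianI • M.1 = M.1
    rw [smul_smul, gaussianI_mul_self, neg_one_smul_addSubgroup]

theorem eq_iterate_gaussianI_smul_iff {n : ℕ} {M N : SubgroupOfIndex GaussianInt n} {k : ℕ} :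
    N = (gaussianI • ·)^[k] M ↔
      N.1 = AddSubgroup.map (AddMonoidHom.mulLeft ((⟨0, 1⟩ : GaussianInt) ^ k)) M.1 := by
  rw [smul_iterate_apply, Subtype.ext_iff]
  rfl

theorem card_fixedPoints_gaussianI_smul (n : ℕ) :
    Nat.card (Function.fixedPoints fun M : SubgroupOfIndex GaussianInt n => gaussianI • M)
      = Nat.card {J : Ideal GaussianInt // J.toAddSubgroup.index = n} := by
  symm
  refine Nat.card_congr (Equiv.ofBijective
    (fun J => ⟨⟨J.1.toAddSubgroup, J.2⟩, Subtype.ext (units_smul_toAddSubgroup gaussianI J.1)⟩)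
    ⟨fun J J' h => ?_, ?_⟩)
  · exact Subtype.ext (Submodule.toAddSubgroup_injective (congrArg (fun M => M.1.1) h))
  · rintro ⟨⟨M, hindex⟩, hM⟩
    have hfixed : gaussianI • M = M := congrArg Subtype.val hM
    obtain ⟨J, rfl⟩ := exists_ideal_toAddSubgroup_eq (M := M) fun x hx =>
      hfixed ▸ AddSubgroup.smul_mem_pointwise_smul x gaussianI M hx
    exact ⟨⟨J, hindex⟩, rfl⟩

/-- The half-open first quadrant of `ℤ[i]`, a fundamental domain for multiplication by units on the
nonzero Gaussian integers. -/
def IsFirstQuadrant (z : GaussianInt) : Prop :=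
  0 < z.re ∧ 0 ≤ z.im

theorem IsFirstQuadrant.ne_zero {z : GaussianInt} (hz : IsFirstQuadrant z) : z ≠ 0 := by
  rintro rfl
  exact hz.1.false

theorem exists_associated_isFirstQuadrant {z : GaussianInt} (hz : z ≠ 0) :
    ∃ w, IsFirstQuadrant w ∧ Associated z w := by
  have hre_or_im : z.re ≠ 0 ∨ z.im ≠ 0 := by
    contrapose! hz
    exact Zsqrtd.ext hz.1 hz.2
  have hcases : IsFirstQuadrant z ∨ IsFirstQuadrant (z * gaussianI) ∨
      IsFirstQuadrant (z * (-1 : GaussianIntˣ)) ∨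
      IsFirstQuadrant (z * (-gaussianI : GaussianIntˣ)) := by
    simp only [IsFirstQuadrant, Units.val_neg, Units.val_one, mul_neg, mul_one, mul_gaussianI,
      Zsqrtd.re_neg, Zsqrtd.im_neg]
    omega
  obtain h | h | h | h := hcases
  · exact ⟨z, h, .refl z⟩
  all_goals exact ⟨_, h, _, rfl⟩

theorem gaussianInt_units_eq (u : GaussianIntˣ) :
    u = 1 ∨ u = gaussianI ∨ u = -1 ∨ u = -gaussianI := by
  have hnorm : u.1.re * u.1.re + u.1.im * u.1.im = 1 := by
    have hone := (Zsqrtd.norm_eq_one_iff' (by decide) u.1).mpr u.isUnit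
    rw [Zsqrtd.norm_def] at hone
    linarith
  have hre : u.1.re ≤ 1 ∧ -1 ≤ u.1.re := by constructor <;> nlinarith
  have him : u.1.im ≤ 1 ∧ -1 ≤ u.1.im := by constructor <;> nlinarith
  have hcases : (u.1.re = 1 ∧ u.1.im = 0) ∨ (u.1.re = 0 ∧ u.1.im = 1) ∨
      (u.1.re = -1 ∧ u.1.im = 0) ∨ (u.1.re = 0 ∧ u.1.im = -1) := by
    generalize u.1.re = x, u.1.im = y at *
    obtain ⟨hx, hx'⟩ := hre
    obtain ⟨hy, hy'⟩ := him
    interval_cases x <;> interval_cases y <;> simp_all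
  have heq {v : GaussianIntˣ} (h : u.1.re = v.1.re ∧ u.1.im = v.1.im) : u = v :=
    Units.ext (Zsqrtd.ext h.1 h.2)
  exact hcases.imp heq (.imp heq (.imp heq heq))

theorem IsFirstQuadrant.eq_of_associated {z w : GaussianInt} (hz : IsFirstQuadrant z)
    (hw : IsFirstQuadrant w) (h : Associated z w) : z = w := by
  obtain ⟨u, rfl⟩ := h
  obtain ⟨hre, him⟩ := hz
  obtain rfl | hu := gaussianInt_units_eq u
  · exact (mul_one z).symm
  exfalso
  obtain rfl | rfl | rfl := hu <;>
    simp only [IsFirstQuadrant, Units.val_neg, Units.val_one, mul_neg, mul_one, mul_gaussianI,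
      Zsqrtd.re_neg, Zsqrtd.im_neg] at hw <;>
    omega

theorem gaussianInt_norm_eq_sq_add_sq (z : GaussianInt) : z.norm = z.re ^ 2 + z.im ^ 2 := by
  rw [Zsqrtd.norm_def]
  ring

theorem index_span_singleton_eq_iff {z : GaussianInt} (hz : z ≠ 0) (n : ℕ) :
    (Ideal.span {z}).toAddSubgroup.index = n ↔ z.re ^ 2 + z.im ^ 2 = n := by
  rw [index_span_singleton_eq_natAbs_norm (GaussianInt.norm_eq_zero.not.mpr hz),
    ← gaussianInt_norm_eq_sq_add_sq]
  have hnonneg := GaussianInt.norm_nonneg z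
  omega

theorem exists_isFirstQuadrant_span_eq {J : Ideal GaussianInt} (hJ : J.toAddSubgroup.index ≠ 0) :
    ∃ w, IsFirstQuadrant w ∧ Ideal.span {w} = J := by
  obtain ⟨z, rfl⟩ := (IsPrincipalIdealRing.principal J).principal
  have hz : z ≠ 0 := by
    rintro rfl
    have : Infinite GaussianInt := .of_injective Int.cast Int.cast_injective
    refine hJ ?_
    rw [Submodule.span_zero_singleton, Submodule.bot_toAddSubgroup, AddSubgroup.index_bot,
      Nat.card_eq_zero_of_infinite]
  obtain ⟨w, hw, hzw⟩ := exists_associated_isFirstQuadrant hz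
  exact ⟨w, hw, Ideal.span_singleton_eq_span_singleton.mpr hzw.symm⟩

theorem card_ideal_of_index {n : ℕ} (hn : n ≠ 0) :
    Nat.card {J : Ideal GaussianInt // J.toAddSubgroup.index = n} = S2 n := by
  symm
  refine Nat.card_congr (Equiv.ofBijective
    (fun pq => ⟨Ideal.span {⟨pq.1.1, pq.1.2⟩}, (index_span_singleton_eq_iff
      (IsFirstQuadrant.ne_zero ⟨pq.2.1, pq.2.2.1⟩) n).mpr pq.2.2.2⟩) ⟨?_, ?_⟩)
  · rintro ⟨⟨p, q⟩, hp, hq, hpq⟩ ⟨⟨p', q'⟩, hp', hq', hpq'⟩ h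
    have hgen := IsFirstQuadrant.eq_of_associated ⟨hp, hq⟩ ⟨hp', hq'⟩
      (Ideal.span_singleton_eq_span_singleton.mp (congrArg Subtype.val h))
    obtain ⟨rfl, rfl⟩ := Zsqrtd.ext_iff.mp hgen
    rfl
  · rintro ⟨J, hJ⟩
    obtain ⟨w, hw, rfl⟩ := exists_isFirstQuadrant_span_eq (hJ ▸ hn)
    exact ⟨⟨(w.re, w.im), hw.1, hw.2, (index_span_singleton_eq_iff hw.ne_zero n).mp hJ⟩, rfl⟩

theorem gaussian_orbit_count_general (n : ℕ) (hn : n ≠ 0) :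
    2 * Nat.card (Quot fun M N : SubgroupOfIndex GaussianInt n =>
      ∃ k : ℕ, N = (gaussianI • ·)^[k] M) = ArithmeticFunction.sigma 1 n + S2 n := by
  have hcard : Nat.card (SubgroupOfIndex GaussianInt n) = ArithmeticFunction.sigma 1 n :=
    card_subgroupOfIndex_zsqrtd (-1) hn
  have : Finite (SubgroupOfIndex GaussianInt n) :=
    Nat.finite_of_card_ne_zero (hcard ▸ (ArithmeticFunction.sigma_pos 1 n hn).ne')
  rw [two_mul_card_quot_iterate (involutive_gaussianI_smul n), hcard,
    card_fixedPoints_gaussianI_smul, card_ideal_of_index hn]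

/-- The number of orbits of the multiplication-by-`i` action on index-`n` additive
subgroups of `ℤ[i]` equals `(σ₁(n) + S₂(n))/2` for `n > 2`. -/
theorem gaussian_orbit_count (n : ℕ) (hn : 2 < n) :
    2 * Nat.card (Quot (fun M N : {M : AddSubgroup GaussianInt // M.index = n} =>
      ∃ k : ℕ, (N : AddSubgroup GaussianInt) =
        AddSubgroup.map (AddMonoidHom.mulLeft ((⟨0, 1⟩ : GaussianInt) ^ k)) (M : AddSubgroup GaussianInt)))
    = ArithmeticFunction.sigma 1 n + S2 n := by
  simpa only [eq_iterate_gaussianI_smul_iff] using gaussian_orbit_count_general n (by omega)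
end

section
/- For every positive integer n, σ₁(n) + 2·h(n) is divisible by 3, where h(n) is the number of ordered integer pairs (p, q) with p > 0, q ≥ 0 and p² + pq + q² = n. -/
/-- `h(n)`: the number of ordered integer pairs `(p, q)` with `p > 0`, `q ≥ 0`
and `p² + pq + q² = n`. -/
noncomputable def hcount (n : ℕ) : ℕ :=
  Nat.card {pq : ℤ × ℤ // 0 < pq.1 ∧ 0 ≤ pq.2 ∧ pq.1 ^ 2 + pq.1 * pq.2 + pq.2 ^ 2 = n}

/-!
By Hermite normal forms, the rank two lattice `ℤ[ω]` of Eisenstein integers, with `ω` a primitive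
sixth root of unity, has `σ₁(n)` sublattices of index `n`. Multiplication by `ω` permutes them with
order dividing `3`, because `ω³ = -1` stabilises every lattice, so `σ₁(n)` is congruent modulo `3`
to the number of fixed points. These are the ideals of norm `n`. As `ℤ[ω]` is a principal ideal
domain, each of them has exactly one generator `p + qω` in the sector `p > 0`, `q ≥ 0`, so there are
`h(n)`.
-/

section SubgroupCount

open AddSubgroup Function

variable {G : Type*} [AddCommGroup G]

theorem index_eq_index_comap_inl_mul_index_map_snd {B : Type*} [AddCommGroup B]
    (L : AddSubgroup (G × B)) :
    L.index = (L.comap (.inl G B)).index * (L.map (.snd G B)).index := by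
  have range_inl : (AddMonoidHom.inl G B).range = (AddMonoidHom.snd G B).ker := by
    ext ⟨x, y⟩
    simp [mem_prod, eq_comm]
  have range_snd : (AddMonoidHom.snd G B).range = ⊤ :=
    AddMonoidHom.range_eq_top.2 Prod.snd_surjective
  rw [index_comap, index_map, range_inl, range_snd, index_top, mul_one, sup_comm,
    ← relIndex_sup_right _ L, relIndex_mul_index le_sup_right]

/-- The subgroup of `G × ℤ` generated by `H × 0` and a lift of `(c, a)`: for `G = ℤ`, the lattice
whose Hermite normal form has diagonal entries `[ℤ : H]` and `a`, with off-diagonal residue `c`. -/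
def hermiteSubgroup (H : AddSubgroup G) (c : G ⧸ H) (a : ℤ) : AddSubgroup (G × ℤ) :=
  (zmultiples (c, a)).comap ((QuotientAddGroup.mk' H).prodMap (.id ℤ))

theorem mem_hermiteSubgroup {H : AddSubgroup G} {c : G ⧸ H} {a : ℤ} {x : G} {y : ℤ} :
    (x, y) ∈ hermiteSubgroup H c a ↔ ∃ k : ℤ, k • c = x ∧ k * a = y := by
  simp [hermiteSubgroup, mem_zmultiples_iff]

theorem comap_inl_hermiteSubgroup (H : AddSubgroup G) (c : G ⧸ H) {a : ℤ} (ha : a ≠ 0) :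
    (hermiteSubgroup H c a).comap (.inl G ℤ) = H := by
  ext x
  simp [mem_hermiteSubgroup, ha, eq_comm (a := (0 : G ⧸ H))]

theorem map_snd_hermiteSubgroup (H : AddSubgroup G) (c : G ⧸ H) (a : ℤ) :
    (hermiteSubgroup H c a).map (.snd G ℤ) = zmultiples a := by
  ext y
  simp only [mem_map, Prod.exists, mem_hermiteSubgroup, AddMonoidHom.coe_snd, exists_eq_right,
    mem_zmultiples_iff, smul_eq_mul]
  constructor
  · rintro ⟨x, k, -, hk⟩
    exact ⟨k, hk⟩
  · rintro ⟨k, hk⟩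
    obtain ⟨x, hx⟩ := QuotientAddGroup.mk_surjective (k • c)
    exact ⟨x, k, hx.symm, hk⟩

theorem index_hermiteSubgroup (H : AddSubgroup G) (c : G ⧸ H) {a : ℤ} (ha : a ≠ 0) :
    (hermiteSubgroup H c a).index = H.index * a.natAbs := by
  rw [index_eq_index_comap_inl_mul_index_map_snd, comap_inl_hermiteSubgroup H c ha,
    map_snd_hermiteSubgroup, Int.index_zmultiples]

theorem hermiteSubgroup_injective (H : AddSubgroup G) {a : ℤ} (ha : a ≠ 0) :
    Injective fun c : G ⧸ H ↦ hermiteSubgroup H c a := by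
  intro c c' (h : hermiteSubgroup H c a = hermiteSubgroup H c' a)
  obtain ⟨x, rfl⟩ := QuotientAddGroup.mk_surjective c
  have hx : (x, a) ∈ hermiteSubgroup H (x : G ⧸ H) a :=
    mem_hermiteSubgroup.2 ⟨1, one_zsmul _, one_mul a⟩
  obtain ⟨k, hk, hka⟩ := mem_hermiteSubgroup.1 (h ▸ hx)
  obtain rfl : k = 1 := (mul_eq_right₀ ha).1 hka
  rw [← hk, one_zsmul]

theorem exists_hermiteSubgroup_eq {L : AddSubgroup (G × ℤ)} {a : ℤ}
    (hL : L.map (.snd G ℤ) = zmultiples a) :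
    ∃ c, hermiteSubgroup (L.comap (.inl G ℤ)) c a = L := by
  obtain ⟨⟨x₀, a'⟩, hx₀, h⟩ : a ∈ L.map (.snd G ℤ) := hL ▸ mem_zmultiples a
  obtain rfl : a' = a := h
  have zsmul_eq_iff (k : ℤ) (x : G) :
      k • (x₀ : G ⧸ L.comap (.inl G ℤ)) = x ↔ (x, k * a') ∈ L := by
    have hxk : (x, k * a') = k • (x₀, a') + (-(k • x₀) + x, 0) := by simp
    rw [← QuotientAddGroup.mk_zsmul, QuotientAddGroup.eq, hxk,
      L.add_mem_cancel_left (L.zsmul_mem hx₀ k)]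
    rfl
  refine ⟨x₀, ext fun ⟨x, y⟩ ↦ mem_hermiteSubgroup.trans ⟨?_, fun hxy ↦ ?_⟩⟩
  · rintro ⟨k, hk, rfl⟩
    exact (zsmul_eq_iff k x).1 hk
  · obtain ⟨k, rfl⟩ : y ∈ zmultiples a' := hL ▸ ⟨(x, y), hxy, rfl⟩
    exact ⟨k, (zsmul_eq_iff k x).2 hxy, rfl⟩

theorem zmultiples_natCast_index (H : AddSubgroup ℤ) : zmultiples (H.index : ℤ) = H := by
  obtain ⟨a, rfl⟩ := Int.subgroup_cyclic H
  rw [← zmultiples_eq_closure, Int.index_zmultiples, Int.zmultiples_natAbs]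

/-- The subgroups of index `n` of an additive group. Index `0` means infinite index. -/
abbrev IndexSubgroup (A : Type*) [AddGroup A] (n : ℕ) : Type _ :=
  {L : AddSubgroup A // L.index = n}

theorem card_indexSubgroup_congr {A B : Type*} [AddGroup A] [AddGroup B] (e : A ≃+ B) (n : ℕ) :
    Nat.card (IndexSubgroup A n) = Nat.card (IndexSubgroup B n) :=
  Nat.card_congr <| e.mapAddSubgroup.toEquiv.subtypeEquiv fun L ↦ by
    rw [← index_map_equiv L e]
    rfl

theorem card_indexSubgroup_int {n : ℕ} : Nat.card (IndexSubgroup ℤ n) = 1 := by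
  refine Nat.card_eq_one_iff_exists.2 ⟨⟨zmultiples n, by simp⟩, ?_⟩
  rintro ⟨H, rfl⟩
  exact Subtype.ext (zmultiples_natCast_index H).symm

theorem natCast_div_ne_zero_of_mem_divisors {n d : ℕ} (hd : d ∈ n.divisors) :
    ((n / d : ℕ) : ℤ) ≠ 0 :=
  Nat.cast_ne_zero.2 (Nat.div_pos (Nat.divisor_le hd) (Nat.pos_of_mem_divisors hd)).ne'

/-- The parametrisation of the subgroups of index `n` of `G × ℤ` by their Hermite normal forms: the
pivot is `n / d`, where `d` is the index of the intersection with `G`. -/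
def hermiteIndexSubgroup (n : ℕ) (x : Σ d : n.divisors, Σ H : IndexSubgroup G d, G ⧸ H.1) :
    IndexSubgroup (G × ℤ) n :=
  ⟨hermiteSubgroup x.2.1.1 x.2.2 (n / x.1 : ℕ), by
    rw [index_hermiteSubgroup _ _ (natCast_div_ne_zero_of_mem_divisors x.1.2), x.2.1.2,
      Int.natAbs_natCast, Nat.mul_div_cancel' (Nat.dvd_of_mem_divisors x.1.2)]⟩

theorem hermiteIndexSubgroup_injective (n : ℕ) :
    Injective (hermiteIndexSubgroup (G := G) n) := by
  rintro ⟨⟨d, hd⟩, ⟨H, rfl : H.index = d⟩, c⟩ ⟨⟨d', hd'⟩, ⟨H', rfl : H'.index = d'⟩, c'⟩ heq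
  have h : hermiteSubgroup H c (n / H.index : ℕ) = hermiteSubgroup H' c' (n / H'.index : ℕ) :=
    congrArg Subtype.val heq
  obtain rfl : H = H' := by
    rw [← comap_inl_hermiteSubgroup H c (natCast_div_ne_zero_of_mem_divisors hd), h,
      comap_inl_hermiteSubgroup H' c' (natCast_div_ne_zero_of_mem_divisors hd')]
  rw [hermiteSubgroup_injective H (natCast_div_ne_zero_of_mem_divisors hd) h]

theorem hermiteIndexSubgroup_surjective {n : ℕ} (hn : n ≠ 0) :
    Surjective (hermiteIndexSubgroup (G := G) n) := by
  rintro ⟨L, rfl⟩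
  obtain ⟨c, hc⟩ := exists_hermiteSubgroup_eq (zmultiples_natCast_index (L.map (.snd G ℤ))).symm
  have hindex := index_eq_index_comap_inl_mul_index_map_snd L
  have hdvd : (L.comap (.inl G ℤ)).index ∣ L.index := Dvd.intro _ hindex.symm
  have hdiv : L.index / (L.comap (.inl G ℤ)).index = (L.map (.snd G ℤ)).index :=
    Nat.div_eq_of_eq_mul_right (Nat.pos_of_ne_zero (ne_zero_of_dvd_ne_zero hn hdvd)) hindex
  rw [← hdiv] at hc
  exact ⟨⟨⟨_, Nat.mem_divisors.2 ⟨hdvd, hn⟩⟩, ⟨_, rfl⟩, c⟩, Subtype.ext hc⟩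

theorem card_indexSubgroup_prod_int {n : ℕ} (hn : n ≠ 0)
    (hfin : ∀ d ∈ n.divisors, Finite (IndexSubgroup G d)) :
    Nat.card (IndexSubgroup (G × ℤ) n) =
      ∑ d ∈ n.divisors, d * Nat.card (IndexSubgroup G d) := by
  have (d : n.divisors) : Finite (IndexSubgroup G d) := hfin d d.2
  have (d : n.divisors) (H : IndexSubgroup G d) : Finite (G ⧸ H.1) :=
    index_ne_zero_iff_finite.1 (H.2.trans_ne (Nat.pos_of_mem_divisors d.2).ne')
  have (d : n.divisors) : Fintype (IndexSubgroup G d) := Fintype.ofFinite _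
  have card_sigma_quotient (d : n.divisors) :
      Nat.card (Σ H : IndexSubgroup G d, G ⧸ H.1) = d * Nat.card (IndexSubgroup G d) :=
    calc
      Nat.card (Σ H : IndexSubgroup G d, G ⧸ H.1)
      _ = ∑ H : IndexSubgroup G d, H.1.index := Nat.card_sigma
      _ = ∑ _H : IndexSubgroup G d, (d : ℕ) := Finset.sum_congr rfl fun H _ ↦ H.2
      _ = d * Nat.card (IndexSubgroup G d) := by
        rw [Finset.sum_const, Finset.card_univ, smul_eq_mul, mul_comm, Nat.card_eq_fintype_card]
  calc
    Nat.card (IndexSubgroup (G × ℤ) n)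
    _ = Nat.card (Σ d : n.divisors, Σ H : IndexSubgroup G d, G ⧸ H.1) :=
      (Nat.card_eq_of_bijective _
        ⟨hermiteIndexSubgroup_injective n, hermiteIndexSubgroup_surjective hn⟩).symm
    _ = ∑ d : n.divisors, (d : ℕ) * Nat.card (IndexSubgroup G d) :=
      Nat.card_sigma.trans (Finset.sum_congr rfl fun d _ ↦ card_sigma_quotient d)
    _ = ∑ d ∈ n.divisors, d * Nat.card (IndexSubgroup G d) :=
      Finset.sum_coe_sort n.divisors fun d ↦ d * Nat.card (IndexSubgroup G d)

theorem card_indexSubgroup_int_prod_int {n : ℕ} (hn : n ≠ 0) :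
    Nat.card (IndexSubgroup (ℤ × ℤ) n) = ArithmeticFunction.sigma 1 n := by
  have hfin (d : ℕ) : Finite (IndexSubgroup ℤ d) :=
    Nat.finite_of_card_ne_zero (card_indexSubgroup_int.trans_ne one_ne_zero)
  rw [card_indexSubgroup_prod_int hn fun d _ ↦ hfin d, ArithmeticFunction.sigma_one_apply]
  simp only [card_indexSubgroup_int, mul_one]

end SubgroupCount

open QuadraticAlgebra

/-- The ideal with underlying additive group `L`, for a subgroup `L` of `ℤ[ω]` stable under
multiplication by `ω`. -/
def idealOfOmegaMulMem {a b : ℤ} (L : AddSubgroup (QuadraticAlgebra ℤ a b))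
    (hL : ∀ z ∈ L, ω * z ∈ L) : Ideal (QuadraticAlgebra ℤ a b) where
  __ := L
  smul_mem' r z hz := by
    have hrz : r • z = r.re • z + r.im • (ω * z) := by
      ext <;> simp <;> ring
    exact hrz ▸ L.add_mem (L.zsmul_mem hz _) (L.zsmul_mem (hL z hz) _)

/-- The ring of Eisenstein integers. The generator `ω` satisfies `ω² = -1 + ω`, so it is a primitive
sixth root of unity (not third), which makes `p² + pq + q²` the norm of `p + qω`. -/
abbrev EisensteinInt : Type := QuadraticAlgebra ℤ (-1) 1

namespace EisensteinInt

/-- The coordinates of an Eisenstein integer in the basis `1, ω`, as an additive isomorphism. -/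
def addEquivProd : EisensteinInt ≃+ ℤ × ℤ where
  __ := equivProd (-1) 1
  map_add' _ _ := rfl

theorem norm_eq (z : EisensteinInt) : norm z = z.re ^ 2 + z.re * z.im + z.im ^ 2 := by
  rw [norm_def]
  ring

theorem norm_nonneg (z : EisensteinInt) : 0 ≤ norm z := by
  rw [norm_eq]
  nlinarith [sq_nonneg (z.re + z.im)]

theorem norm_pos {z : EisensteinInt} (hz : z ≠ 0) : 0 < norm z := by
  refine (norm_nonneg z).lt_of_ne' fun h ↦ hz ?_
  rw [norm_eq] at h
  have hre : z.re = 0 := by nlinarith [sq_nonneg (z.re + z.im)]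
  have him : z.im = 0 := by nlinarith [sq_nonneg (z.re + z.im)]
  exact QuadraticAlgebra.ext hre him

/-- Division with rounding, as needed for Euclidean division: the coordinates of
`z * star w / norm w` are rounded to nearest integers. -/
instance : Div EisensteinInt where
  div z w := ⟨(z * star w).re.bdiv (norm w).natAbs, (z * star w).im.bdiv (norm w).natAbs⟩

protected theorem div_zero (z : EisensteinInt) : z / 0 = 0 := by
  have hre : (z / 0).re = (z * star 0).re.bdiv (norm (0 : EisensteinInt)).natAbs := rfl
  have him : (z / 0).im = (z * star 0).im.bdiv (norm (0 : EisensteinInt)).natAbs := rfl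
  rw [QuadraticAlgebra.norm_zero] at hre him
  exact QuadraticAlgebra.ext hre him

theorem sub_mul_div_mul_star (z w : EisensteinInt) :
    (z - w * (z / w)) * star w =
      ⟨(z * star w).re.bmod (norm w).natAbs, (z * star w).im.bmod (norm w).natAbs⟩ := by
  have hw : w * star w = algebraMap ℤ EisensteinInt (norm w).natAbs := by
    rw [Int.natAbs_of_nonneg (norm_nonneg w), algebraMap_norm_eq_mul_star]
  have hzw : (z - w * (z / w)) * star w =
      z * star w - algebraMap ℤ EisensteinInt (norm w).natAbs * (z / w) := by
    rw [← hw]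
    ring
  rw [hzw, Int.bmod_eq_self_sub_mul_bdiv, Int.bmod_eq_self_sub_mul_bdiv, ← C_eq_algebraMap,
    C_mul_eq_smul]
  rfl

theorem norm_sub_mul_div_lt (z : EisensteinInt) {w : EisensteinInt} (hw : w ≠ 0) :
    norm (z - w * (z / w)) < norm w := by
  have hpos : 0 < norm w := norm_pos hw
  have four_mul_sq_bmod_le (a : ℤ) : 4 * a.bmod (norm w).natAbs ^ 2 ≤ norm w ^ 2 := by
    have hle := Int.le_bmod (x := a) (Int.natAbs_pos.2 hpos.ne')
    have hge := Int.bmod_le (x := a) (Int.natAbs_pos.2 hpos.ne')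
    have := sq_le_sq' (a := 2 * a.bmod (norm w).natAbs) (b := norm w) (by omega) (by omega)
    linarith
  have hlt : norm (z - w * (z / w)) * norm w < norm w * norm w :=
    calc
      norm (z - w * (z / w)) * norm w
      _ = norm ((z - w * (z / w)) * star w) := by rw [map_mul, QuadraticAlgebra.norm_star]
      _ < norm w * norm w := by
        rw [sub_mul_div_mul_star, norm_eq]
        set x := (z * star w).re.bmod (norm w).natAbs
        set y := (z * star w).im.bmod (norm w).natAbs
        nlinarith [four_mul_sq_bmod_le (z * star w).re, four_mul_sq_bmod_le (z * star w).im,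
          sq_nonneg (x - y)]
  exact lt_of_mul_lt_mul_right hlt hpos.le

instance : EuclideanDomain EisensteinInt where
  quotient := (· / ·)
  quotient_zero := EisensteinInt.div_zero
  remainder z w := z - w * (z / w)
  quotient_mul_add_remainder_eq _ _ := add_sub_cancel _ _
  r := InvImage (· < ·) fun z ↦ (norm z).natAbs
  r_wellFounded := InvImage.wf _ wellFounded_lt
  remainder_lt z w hw :=
    Int.natAbs_lt_natAbs_of_nonneg_of_lt (norm_nonneg _) (norm_sub_mul_div_lt z hw)
  mul_left_not_lt z w hw := by
    rw [InvImage, map_mul, Int.natAbs_mul, not_lt]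
    exact Nat.le_mul_of_pos_right _ (Int.natAbs_pos.2 (norm_pos hw).ne')

theorem absNorm_span_singleton (z : EisensteinInt) :
    Ideal.absNorm (Ideal.span {z}) = (norm z).natAbs := by
  rw [Ideal.absNorm_span_singleton, Algebra.norm_apply, ← det_toLinearMap_eq_norm]
  rfl

theorem norm_unit (u : EisensteinIntˣ) : norm (u : EisensteinInt) = 1 :=
  (Int.isUnit_iff.1 (isUnit_iff_norm_isUnit.1 u.isUnit)).resolve_right fun h ↦ by
    linarith [norm_nonneg (u : EisensteinInt)]

theorem omega_mul (z : EisensteinInt) : ω * z = ⟨-z.im, z.re + z.im⟩ := by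
  ext <;> simp

theorem omega_pow_three : (ω : EisensteinInt) ^ 3 = -1 := by
  rw [pow_succ', pow_two, omega_mul, omega_mul]
  rfl

theorem isUnit_omega : IsUnit (ω : EisensteinInt) :=
  IsUnit.of_pow_eq_one (n := 6) (by rw [pow_mul ω 3 2, omega_pow_three, neg_one_sq]) (by decide)

/-- The sector `0 ≤ arg z < π / 3`, a fundamental domain for multiplication by the six units. -/
def sector : Set EisensteinInt := {z | 0 < z.re ∧ 0 ≤ z.im}

theorem eq_one_of_norm_eq_one {u : EisensteinInt} (hu : norm u = 1) (hre : 0 < u.re)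
    (hre_add_im : 0 < u.re + u.im) : u = 1 := by
  have hsum : u.re * (u.re + u.im) + u.im ^ 2 = 1 := by
    rw [norm_eq] at hu
    linarith
  have him : u.im = 0 := by nlinarith
  have hre_one : u.re = 1 := by nlinarith
  exact QuadraticAlgebra.ext hre_one him

theorem eq_of_associated_of_mem_sector {z w : EisensteinInt} (hz : z ∈ sector) (hw : w ∈ sector)
    (hzw : Associated z w) : z = w := by
  obtain ⟨u, rfl⟩ := hzw
  obtain ⟨hzre, hzim⟩ := hz
  set v := (u : EisensteinInt)
  set w := z * v with hw_def
  obtain ⟨hwre, hwim⟩ := hw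
  -- `norm z * v = star z * w` has argument in `(-π / 3, π / 3)`, and `1` is the only unit there.
  have hre : 0 < norm z * v.re :=
    calc
      0 < (z.re + z.im) * w.re + z.im * w.im := by positivity
      _ = norm z * v.re := by
        simp only [hw_def, norm_eq, re_mul, im_mul]
        ring
  have hre_add_im : 0 < norm z * (v.re + v.im) :=
    calc
      0 < z.re * w.re + z.re * w.im + z.im * w.im := by positivity
      _ = norm z * (v.re + v.im) := by
        simp only [hw_def, norm_eq, re_mul, im_mul]
        ring
  have hv : v = 1 := eq_one_of_norm_eq_one (norm_unit u)
    (pos_of_mul_pos_right hre (norm_nonneg z)) (pos_of_mul_pos_right hre_add_im (norm_nonneg z))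
  rw [hw_def, hv, mul_one]

theorem exists_omega_pow_mul_mem_sector {z : EisensteinInt} (hz : z ≠ 0) :
    ∃ k : ℕ, ω ^ k * z ∈ sector := by
  have hz' : ¬(z.re = 0 ∧ z.im = 0) := fun h ↦ hz (QuadraticAlgebra.ext h.1 h.2)
  have sextant : (0 < z.re ∧ 0 ≤ z.im) ∨ (0 < z.re + z.im ∧ z.re ≤ 0) ∨
      (0 < z.im ∧ z.re + z.im ≤ 0) ∨ (z.re < 0 ∧ z.im ≤ 0) ∨ (z.re + z.im < 0 ∧ 0 ≤ z.re) ∨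
      (z.im < 0 ∧ 0 ≤ z.re + z.im) := by
    omega
  have omega_pow_succ_mul (k : ℕ) (w : EisensteinInt) :
      ω ^ (k + 1) * w = ω ^ k * ⟨-w.im, w.re + w.im⟩ := by
    rw [pow_succ, mul_assoc, omega_mul]
  rcases sextant with h | h | h | h | h | h <;> [use 0; use 5; use 4; use 3; use 2; use 1]
  all_goals
    simp only [sector, Set.mem_ofPred_eq, omega_pow_succ_mul, pow_zero, one_mul]
    omega

theorem exists_mem_sector_associated {z : EisensteinInt} (hz : z ≠ 0) :
    ∃ w ∈ sector, Associated w z := by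
  obtain ⟨k, hk⟩ := exists_omega_pow_mul_mem_sector hz
  exact ⟨_, hk, associated_unit_mul_left z _ (isUnit_omega.pow k)⟩

theorem card_mem_sector_norm_eq (n : ℕ) :
    Nat.card {z : EisensteinInt // z ∈ sector ∧ norm z = n} = hcount n :=
  Nat.card_congr <| (equivProd (-1) 1).subtypeEquiv fun z ↦ by
    rw [norm_eq, sector, Set.mem_ofPred_eq, and_assoc]
    rfl

theorem exists_mem_sector_span_singleton_eq {I : Ideal EisensteinInt} (hI : I ≠ ⊥) :
    ∃ z ∈ sector, Ideal.span {z} = I := by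
  obtain ⟨g, rfl⟩ := (IsPrincipalIdealRing.principal I).principal
  have hg : g ≠ 0 := fun h ↦ hI (Submodule.span_singleton_eq_bot.2 h)
  obtain ⟨z, hz, hzg⟩ := exists_mem_sector_associated hg
  exact ⟨z, hz, Ideal.span_singleton_eq_span_singleton.2 hzg⟩

theorem card_ideal_absNorm_eq {n : ℕ} (hn : n ≠ 0) :
    Nat.card {I : Ideal EisensteinInt // I.absNorm = n} = hcount n := by
  let spanSingleton (z : {z : EisensteinInt // z ∈ sector ∧ norm z = n}) :
      {I : Ideal EisensteinInt // I.absNorm = n} :=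
    ⟨Ideal.span {z.1}, by rw [absNorm_span_singleton, z.2.2, Int.natAbs_natCast]⟩
  rw [← card_mem_sector_norm_eq]
  refine (Nat.card_eq_of_bijective spanSingleton ⟨?_, ?_⟩).symm
  · rintro ⟨z, hz, _⟩ ⟨w, hw, _⟩ hzw
    have := Ideal.span_singleton_eq_span_singleton.1 (congrArg Subtype.val hzw)
    exact Subtype.ext (eq_of_associated_of_mem_sector hz hw this)
  · rintro ⟨I, rfl⟩
    have hI : I ≠ ⊥ := fun h ↦ hn (Ideal.absNorm_eq_zero_iff.2 h)
    obtain ⟨z, hz, rfl⟩ := exists_mem_sector_span_singleton_eq hI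
    refine ⟨⟨z, hz, ?_⟩, rfl⟩
    rw [absNorm_span_singleton, Int.natAbs_of_nonneg (norm_nonneg z)]

open Function

/-- Rotation by `-π / 3`, acting on the sublattices of index `n` as `L ↦ ω⁻¹ L`. -/
def rotate (n : ℕ) : Function.End (IndexSubgroup EisensteinInt n) := fun L ↦
  ⟨L.1.comap (.mulLeft ω), by
    rw [AddSubgroup.index_comap_of_surjective L.1
      (IsUnit.isUnit_iff_mulLeft_bijective.1 isUnit_omega).surjective, L.2]⟩

theorem mem_rotate {n : ℕ} {L : IndexSubgroup EisensteinInt n} {z : EisensteinInt} :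
    z ∈ (rotate n L).1 ↔ ω * z ∈ L.1 :=
  Iff.rfl

theorem rotate_pow_three (n : ℕ) : rotate n ^ 3 = 1 := by
  funext L
  refine Subtype.ext (AddSubgroup.ext fun z ↦ ?_)
  change z ∈ (rotate n (rotate n (rotate n L))).1 ↔ z ∈ L.1
  rw [mem_rotate, mem_rotate, mem_rotate, ← mul_assoc, ← mul_assoc, ← pow_three', omega_pow_three,
    neg_one_mul, neg_mem_iff]

theorem mem_fixedPoints_rotate_iff {n : ℕ} {L : IndexSubgroup EisensteinInt n} :
    L ∈ fixedPoints (rotate n) ↔ ∃ I : Ideal EisensteinInt, I.toAddSubgroup = L.1 := by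
  constructor
  · intro hL
    have omega_mul_mem_iff (z : EisensteinInt) : ω * z ∈ L.1 ↔ z ∈ L.1 :=
      AddSubgroup.ext_iff.1 (congrArg Subtype.val hL) z
    exact ⟨idealOfOmegaMulMem L.1 fun z hz ↦ (omega_mul_mem_iff z).2 hz, rfl⟩
  · rintro ⟨I, hI⟩
    refine Subtype.ext (AddSubgroup.ext fun z ↦ ?_)
    rw [mem_rotate, ← hI]
    exact I.unit_mul_mem_iff_mem isUnit_omega

theorem card_fixedPoints_rotate (n : ℕ) :
    Nat.card (fixedPoints (rotate n)) =
      Nat.card {I : Ideal EisensteinInt // I.absNorm = n} := by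
  let ofIdeal (I : {I : Ideal EisensteinInt // I.absNorm = n}) : fixedPoints (rotate n) :=
    ⟨⟨I.1.toAddSubgroup, I.2⟩, mem_fixedPoints_rotate_iff.2 ⟨I.1, rfl⟩⟩
  refine (Nat.card_eq_of_bijective ofIdeal ⟨fun I J hIJ ↦ ?_, ?_⟩).symm
  · exact Subtype.ext (Submodule.toAddSubgroup_injective (congrArg (·.1.1) hIJ))
  · rintro ⟨⟨L, hL⟩, hfixed⟩
    obtain ⟨I, rfl⟩ := mem_fixedPoints_rotate_iff.1 hfixed
    exact ⟨⟨I, hL⟩, rfl⟩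

theorem card_indexSubgroup {n : ℕ} (hn : n ≠ 0) :
    Nat.card (IndexSubgroup EisensteinInt n) = ArithmeticFunction.sigma 1 n := by
  rw [card_indexSubgroup_congr addEquivProd, card_indexSubgroup_int_prod_int hn]

theorem card_indexSubgroup_modEq_card_fixedPoints_rotate {n : ℕ} (hn : n ≠ 0) :
    Nat.card (IndexSubgroup EisensteinInt n) ≡ Nat.card (fixedPoints (rotate n)) [MOD 3] := by
  classical
  have : Finite (IndexSubgroup EisensteinInt n) := Nat.finite_of_card_ne_zero <| by
    rw [card_indexSubgroup hn]
    exact (ArithmeticFunction.sigma_pos 1 n hn).ne'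
  have := Fintype.ofFinite (IndexSubgroup EisensteinInt n)
  have rotate_pow : rotate n ^ 3 ^ 1 = 1 := by rw [pow_one, rotate_pow_three]
  simpa only [← Nat.card_eq_fintype_card] using Equiv.Perm.card_fixedPoints_modEq rotate_pow

end EisensteinInt

open EisensteinInt in
/-- For every positive integer `n`, `σ₁(n) + 2h(n)` is divisible by `3`. -/
theorem sigma_add_two_h_div_three (n : ℕ) (hn : 0 < n) :
    3 ∣ ArithmeticFunction.sigma 1 n + 2 * hcount n := by
  have sigma_modEq : ArithmeticFunction.sigma 1 n ≡ hcount n [MOD 3] := by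
    rw [← card_indexSubgroup hn.ne', ← card_ideal_absNorm_eq hn.ne', ← card_fixedPoints_rotate]
    exact card_indexSubgroup_modEq_card_fixedPoints_rotate hn.ne'
  have three_dvd : 3 ∣ hcount n + 2 * hcount n := ⟨hcount n, by ring⟩
  exact ((sigma_modEq.add_right _).dvd_iff dvd_rfl).2 three_dvd
end
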